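/- Let p > 1 and a, b, L > 0. Then λ^{a,b}_{1,p}(0,L) = ((a+b)/2)^p · λ_{1,p}(0,L), where λ_{1,p}(0,L) = λ^{1,1}_{1,p}(0,L) is the first Dirichlet eigenvalue of the classical one-dimensional p-Laplacian. -/

import Mathlib

open Set

/-- `u` is C¹ on `[α, γ]` with derivative `u'` there. -/
def C1On (α γ : ℝ) (u u' : ℝ → ℝ) : Prop :=
  (∀ t ∈ Set.Icc α γ, HasDerivWithinAt u (u' t) (Set.Icc α γ) t) ∧
  ContinuousOn u' (Set.Icc α γ)

/-- Admissible functions on `[0, L]`: C¹ with zero boundary values. -/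
def Adm (L : ℝ) (u u' : ℝ → ℝ) : Prop :=
  C1On 0 L u u' ∧ u 0 = 0 ∧ u L = 0

/-- The asymmetric energy integrand `a^p (s⁺)^p + b^p (s⁻)^p`. -/
noncomputable def asymE (p a b s : ℝ) : ℝ :=
  a ^ p * (max s 0) ^ p + b ^ p * (max (-s) 0) ^ p

/-- The asymmetric flux `a^p (s⁺)^(p-1) - b^p (s⁻)^(p-1)`. -/
noncomputable def asymFlux (p a b s : ℝ) : ℝ :=
  a ^ p * (max s 0) ^ (p - 1) - b ^ p * (max (-s) 0) ^ (p - 1)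

/-- The first Dirichlet eigenvalue `λ^{a,b}_{1,p}(0,L)`, as the infimum of the
asymmetric energy over normalized admissible functions. -/
noncomputable def lam1 (p a b L : ℝ) : ℝ :=
  sInf { E : ℝ | ∃ u u' : ℝ → ℝ, Adm L u u' ∧
    (∫ t in (0:ℝ)..L, |u t| ^ p) = 1 ∧
    E = ∫ t in (0:ℝ)..L, asymE p a b (u' t) }

/-- `u` (a C¹ function on `[0,L]` with derivative `u'` and zero boundary values)
is a weak solution of `-Δ^{a,b}_p u = g` on `(0,L)`. -/
def IsWeakSol (p a b L : ℝ) (u u' g : ℝ → ℝ) : Prop :=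
  Adm L u u' ∧
  ∀ φ φ' : ℝ → ℝ, Adm L φ φ' →
    (∫ t in (0:ℝ)..L, asymFlux p a b (u' t) * φ' t) =
      ∫ t in (0:ℝ)..L, g t * φ t

open MeasureTheory

/-!
Both inequalities compare the eigenvalue with the problem for one monotone branch of a first
eigenfunction, rescaled to `[0, 1]`: if `κ` is the best constant in `κ ∫₀¹ wᵖ ≤ ∫₀¹ (w')ᵖ` for
nondecreasing `w` with `w 0 = 0`, then `λ^{a,b}(0, L) = κ ((a + b) / L) ^ p`, so that `a` and `b`
enter only through their sum.

For `≤`, rescale `w` to an increasing branch of length `a L / (a + b)` and a decreasing one of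
length `b L / (a + b)`. These lengths give the two branches the same energy density, so the Rayleigh
quotient of the resulting tent is `((a + b) / L) ^ p` times that of `w`.

For `≥`, split a nodal interval of length `ℓ ≤ L` in the same proportion `a : b`. On the left part
the positive part of `u` is at most the primitive of the positive part of `u'`, which is
nondecreasing and vanishes at the left end; the right part is the mirror image. Each part has
constant `κ ((a + b) / ℓ) ^ p ≥ κ ((a + b) / L) ^ p`.
-/

/-! ### Components of open subsets of the line -/

theorem exists_connectedComponentIn_eq_Ioo {U : Set ℝ} (hU : IsOpen U) (hbelow : BddBelow U)
    (habove : BddAbove U) {x : ℝ} (hx : x ∈ U) :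
    ∃ α β, α < β ∧ α ∉ U ∧ β ∉ U ∧ connectedComponentIn U x = Ioo α β := by
  set C := connectedComponentIn U x
  have hxC : x ∈ C := mem_connectedComponentIn hx
  have hCU : C ⊆ U := connectedComponentIn_subset U x
  have hbelowC := hbelow.mono hCU
  have haboveC := habove.mono hCU
  have hC : C = Ioo (sInf C) (sSup C) := by
    refine Subset.antisymm ?_ (IsConnected.Ioo_csInf_csSup_subset
      ⟨⟨x, hxC⟩, isPreconnected_connectedComponentIn⟩ hbelowC haboveC)
    rw [← interior_Icc]
    exact interior_maximal (subset_Icc_csInf_csSup hbelowC haboveC) hU.connectedComponentIn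
  obtain ⟨α, β, hαβ⟩ : ∃ α β, C = Ioo α β := ⟨_, _, hC⟩
  have hx' : x ∈ Ioo α β := hαβ ▸ hxC
  have hlt : α < β := hx'.1.trans hx'.2
  have hIoo : Ioo α β ⊆ U := hαβ ▸ hCU
  refine ⟨α, β, hlt, fun hα => ?_, fun hβ => ?_, hαβ⟩
  · have hsub : Ico α β ⊆ C := isPreconnected_Ico.subset_connectedComponentIn
      (Ioo_subset_Ico_self hx') (by
        rw [← Ioo_insert_left hlt]
        exact insert_subset hα hIoo)
    exact lt_irrefl α (hαβ ▸ hsub (left_mem_Ico.2 hlt) : α ∈ Ioo α β).1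
  · have hsub : Ioc α β ⊆ C := isPreconnected_Ioc.subset_connectedComponentIn
      (Ioo_subset_Ioc_self hx') (by
        rw [← Ioo_insert_right hlt]
        exact insert_subset hβ hIoo)
    exact lt_irrefl β (hαβ ▸ hsub (right_mem_Ioc.2 hlt) : β ∈ Ioo α β).2

theorem setIntegral_mono_of_components {U : Set ℝ} (hU : IsOpen U) (hbelow : BddBelow U)
    (habove : BddAbove U) {μ : Measure ℝ} {f g : ℝ → ℝ} (hf : IntegrableOn f U μ)
    (hg : IntegrableOn g U μ)
    (h : ∀ α β, α < β → α ∉ U → β ∉ U → Ioo α β ⊆ U →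
      ∫ t in Ioo α β, f t ∂μ ≤ ∫ t in Ioo α β, g t ∂μ) :
    ∫ t in U, f t ∂μ ≤ ∫ t in U, g t ∂μ := by
  set C := connectedComponentIn U '' U
  have hdisj : C.PairwiseDisjoint id := by
    rintro _ ⟨x, -, rfl⟩ _ ⟨y, -, rfl⟩ hne
    refine disjoint_left.2 fun z hzx hzy => hne ?_
    rw [connectedComponentIn_eq hzx, connectedComponentIn_eq hzy]
  have hopen : ∀ s ∈ C, IsOpen s := by
    rintro _ ⟨x, -, rfl⟩
    exact hU.connectedComponentIn
  have : Countable C := hdisj.countable_of_isOpen hopen <| by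
    rintro _ ⟨x, hx, rfl⟩
    exact ⟨x, mem_connectedComponentIn hx⟩
  have hUC : ⋃ s : C, (s : Set ℝ) = U := by
    refine Subset.antisymm (iUnion_subset ?_) fun x hx =>
      mem_iUnion.2 ⟨⟨_, x, hx, rfl⟩, mem_connectedComponentIn hx⟩
    rintro ⟨_, x, -, rfl⟩
    exact connectedComponentIn_subset U x
  have hsum {φ : ℝ → ℝ} (hφ : IntegrableOn φ U μ) :
      HasSum (fun s : C => ∫ t in (s : Set ℝ), φ t ∂μ) (∫ t in U, φ t ∂μ) := by
    have := hasSum_integral_iUnion (s := fun s : C => (s : Set ℝ))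
      (fun s => (hopen s s.2).measurableSet) (hdisj.subtype _ _) (by rwa [hUC])
    rwa [hUC] at this
  refine hasSum_le ?_ (hsum hf) (hsum hg)
  rintro ⟨_, x, hx, rfl⟩
  obtain ⟨α, β, hαβ, hα, hβ, heq⟩ := exists_connectedComponentIn_eq_Ioo hU hbelow habove hx
  simpa only [heq] using h α β hαβ hα hβ (heq ▸ connectedComponentIn_subset U x)

theorem forall_pos_or_forall_neg {X : Type*} [TopologicalSpace X] {s : Set X}
    (hs : IsPreconnected s) {u : X → ℝ} (hu : ContinuousOn u s) (h : ∀ t ∈ s, u t ≠ 0) :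
    (∀ t ∈ s, 0 < u t) ∨ ∀ t ∈ s, u t < 0 := by
  by_contra! hcon
  obtain ⟨⟨x, hx, hux⟩, y, hy, huy⟩ := hcon
  obtain ⟨z, hz, huz⟩ := hs.intermediate_value hx hy hu ⟨hux, huy⟩
  exact h z hz huz

/-! ### `C¹` functions on the line -/

/-- `u` is `C¹` on the whole line, with derivative `u'`. -/
structure HasContDeriv (u u' : ℝ → ℝ) : Prop where
  hasDerivAt : ∀ t, HasDerivAt u (u' t) t
  continuous_deriv : Continuous u'

namespace HasContDeriv

variable {u u' w w' : ℝ → ℝ}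

protected theorem continuous (h : HasContDeriv u u') : Continuous u :=
  continuous_iff_continuousAt.2 fun t => (h.hasDerivAt t).continuousAt

theorem integral_deriv (h : HasContDeriv u u') (α β : ℝ) : ∫ t in α..β, u' t = u β - u α :=
  intervalIntegral.integral_eq_sub_of_hasDerivAt (fun t _ => h.hasDerivAt t)
    (h.continuous_deriv.intervalIntegrable α β)

theorem primitive (hu : Continuous u) (α : ℝ) : HasContDeriv (fun t => ∫ s in α..t, u s) u :=
  ⟨fun t => (hu.integral_hasStrictDerivAt α t).hasDerivAt, hu⟩

theorem neg (h : HasContDeriv u u') : HasContDeriv (fun t => -u t) fun t => -u' t :=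
  ⟨fun t => (h.hasDerivAt t).neg, h.continuous_deriv.neg⟩

theorem add_const (h : HasContDeriv u u') (c : ℝ) : HasContDeriv (fun t => u t + c) u' :=
  ⟨fun t => (h.hasDerivAt t).add_const c, h.continuous_deriv⟩

theorem comp_mul_add (h : HasContDeriv u u') (c d : ℝ) :
    HasContDeriv (fun t => u (c * t + d)) fun t => c * u' (c * t + d) := by
  refine ⟨fun t => ?_, ?_⟩
  · have hlin : HasDerivAt (fun t => c * t + d) c t := by
      simpa using ((hasDerivAt_id t).const_mul c).add_const d
    exact ((h.hasDerivAt (c * t + d)).comp t hlin).congr_deriv (mul_comm _ _)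
  · have := h.continuous_deriv
    fun_prop

theorem monotone (h : HasContDeriv w w') (h0 : ∀ t, 0 ≤ w' t) : Monotone w :=
  monotone_of_hasDerivAt_nonneg h.hasDerivAt h0

theorem adm (h : HasContDeriv u u') {L : ℝ} (h0 : u 0 = 0) (hL : u L = 0) : Adm L u u' :=
  ⟨⟨fun t _ => (h.hasDerivAt t).hasDerivWithinAt, h.continuous_deriv.continuousOn⟩, h0, hL⟩

end HasContDeriv

theorem C1On.exists_hasContDeriv {α γ : ℝ} {u u' : ℝ → ℝ} (h : C1On α γ u u') (hαγ : α ≤ γ) :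
    ∃ v v', HasContDeriv v v' ∧ EqOn v u (Icc α γ) ∧ EqOn v' u' (Icc α γ) := by
  obtain ⟨hderiv, hcont⟩ := h
  set v' : ℝ → ℝ := IccExtend hαγ ((Icc α γ).domRestrict u')
  have hv' : Continuous v' := (continuousOn_iff_continuous_domRestrict.1 hcont).Icc_extend'
  have heq : EqOn v' u' (Icc α γ) := fun t ht => IccExtend_of_mem hαγ _ ht
  refine ⟨fun t => (∫ s in α..t, v' s) + u α, v', (HasContDeriv.primitive hv' α).add_const _,
    fun t ht => ?_, heq⟩
  have hsub : Icc α t ⊆ Icc α γ := Icc_subset_Icc_right ht.2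
  have hint : ∫ s in α..t, v' s = u t - u α :=
    intervalIntegral.integral_eq_sub_of_hasDerivAt_of_le ht.1
      (fun s hs => (hderiv s (hsub hs)).continuousWithinAt.mono hsub)
      (fun s hs => by
        have hs' := hsub (Ioo_subset_Icc_self hs)
        rw [heq hs']
        exact (hderiv s hs').hasDerivAt (Icc_mem_nhds hs.1 (hs.2.trans_le ht.2)))
      (hv'.intervalIntegrable α t)
  simp only [hint, sub_add_cancel]

/-! ### The asymmetric energy density -/

section AsymE

variable {p a b s : ℝ}

theorem continuous_asymE (hp : 0 ≤ p) (a b : ℝ) : Continuous (asymE p a b) := by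
  unfold asymE
  fun_prop (disch := exact fun _ => Or.inr hp)

theorem asymE_neg (p a b s : ℝ) : asymE p a b (-s) = asymE p b a s := by
  rw [asymE, asymE, neg_neg, add_comm]

theorem rpow_mul_max_rpow_le_asymE (hb : 0 ≤ b) (s : ℝ) :
    a ^ p * max s 0 ^ p ≤ asymE p a b s :=
  le_add_of_nonneg_right <|
    mul_nonneg (Real.rpow_nonneg hb p) (Real.rpow_nonneg (le_max_right _ _) p)

theorem asymE_nonneg (ha : 0 ≤ a) (hb : 0 ≤ b) (s : ℝ) : 0 ≤ asymE p a b s :=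
  (mul_nonneg (Real.rpow_nonneg ha p) (Real.rpow_nonneg (le_max_right _ _) p)).trans
    (rpow_mul_max_rpow_le_asymE hb s)

theorem asymE_const_mul {c : ℝ} (hc : 0 ≤ c) (s : ℝ) :
    asymE p a b (c * s) = c ^ p * asymE p a b s := by
  have hmax (r : ℝ) : max (c * r) 0 ^ p = c ^ p * max r 0 ^ p := by
    rw [← Real.mul_rpow hc (le_max_right _ _), mul_max_of_nonneg _ _ hc, mul_zero]
  rw [asymE, asymE, ← mul_neg, hmax, hmax]
  ring

theorem asymE_of_nonneg (hp : p ≠ 0) (ha : 0 ≤ a) (hs : 0 ≤ s) : asymE p a b s = (a * s) ^ p := by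
  rw [asymE, max_eq_left hs, max_eq_right (neg_nonpos.2 hs), Real.zero_rpow hp, mul_zero, add_zero,
    Real.mul_rpow ha hs]

end AsymE

/-! ### The eigenvalue as the best constant in a Poincaré inequality -/

section Eigenvalue

variable {p a b L : ℝ} {u u' : ℝ → ℝ}

theorem Adm.const_mul (h : Adm L u u') (c : ℝ) : Adm L (fun t => c * u t) fun t => c * u' t := by
  obtain ⟨⟨hderiv, hcont⟩, h0, hL⟩ := h
  exact ⟨⟨fun t ht => (hderiv t ht).const_mul c, continuousOn_const.mul hcont⟩, by simp [h0],
    by simp [hL]⟩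

theorem Adm.exists_normalized (h : Adm L u u') (hp : p ≠ 0)
    (hu : 0 < ∫ t in (0 : ℝ)..L, |u t| ^ p) :
    ∃ v v', Adm L v v' ∧ ∫ t in (0 : ℝ)..L, |v t| ^ p = 1 ∧
      ∫ t in (0 : ℝ)..L, asymE p a b (v' t) =
        (∫ t in (0 : ℝ)..L, |u t| ^ p)⁻¹ * ∫ t in (0 : ℝ)..L, asymE p a b (u' t) := by
  set I := ∫ t in (0 : ℝ)..L, |u t| ^ p with hI
  have hc : 0 ≤ I⁻¹ ^ p⁻¹ := by positivity
  have hcp : (I⁻¹ ^ p⁻¹) ^ p = I⁻¹ := Real.rpow_inv_rpow (by positivity) hp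
  refine ⟨_, _, h.const_mul (I⁻¹ ^ p⁻¹), ?_, ?_⟩
  · simp only [abs_mul, abs_of_nonneg hc, Real.mul_rpow hc (abs_nonneg _), hcp]
    rw [intervalIntegral.integral_const_mul, ← hI, inv_mul_cancel₀ hu.ne']
  · simp only [asymE_const_mul hc, hcp, intervalIntegral.integral_const_mul]

theorem integral_asymE_nonneg (ha : 0 ≤ a) (hb : 0 ≤ b) (hL : 0 ≤ L) (u' : ℝ → ℝ) :
    0 ≤ ∫ t in (0 : ℝ)..L, asymE p a b (u' t) :=
  intervalIntegral.integral_nonneg hL fun _ _ => asymE_nonneg ha hb _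

theorem lam1_nonneg (ha : 0 ≤ a) (hb : 0 ≤ b) (hL : 0 ≤ L) : 0 ≤ lam1 p a b L := by
  refine Real.sInf_nonneg ?_
  rintro _ ⟨u, u', -, -, rfl⟩
  exact integral_asymE_nonneg ha hb hL u'

theorem lam1_mul_integral_le (hp : p ≠ 0) (ha : 0 ≤ a) (hb : 0 ≤ b) (hL : 0 ≤ L)
    (h : Adm L u u') :
    lam1 p a b L * ∫ t in (0 : ℝ)..L, |u t| ^ p ≤ ∫ t in (0 : ℝ)..L, asymE p a b (u' t) := by
  have hI : 0 ≤ ∫ t in (0 : ℝ)..L, |u t| ^ p :=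
    intervalIntegral.integral_nonneg hL fun _ _ => by positivity
  rcases hI.eq_or_lt with hI | hI
  · rw [← hI, mul_zero]
    exact integral_asymE_nonneg ha hb hL u'
  obtain ⟨v, v', hv, hv1, hE⟩ := h.exists_normalized (a := a) (b := b) hp hI
  have hle : lam1 p a b L ≤ ∫ t in (0 : ℝ)..L, asymE p a b (v' t) := by
    refine csInf_le ⟨0, ?_⟩ ⟨v, v', hv, hv1, rfl⟩
    rintro _ ⟨z, z', -, -, rfl⟩
    exact integral_asymE_nonneg ha hb hL z'
  rwa [hE, inv_mul_eq_div, le_div_iff₀ hI] at hle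

theorem adm_mul_sub (L : ℝ) : Adm L (fun t => t * (L - t)) fun t => L - 2 * t := by
  have h : HasContDeriv (fun t => t * (L - t)) fun t => L - 2 * t :=
    ⟨fun t => by
      refine ((hasDerivAt_id t).mul ((hasDerivAt_id t).const_sub L)).congr_deriv ?_
      simp only [id_eq]
      ring, by fun_prop⟩
  exact h.adm (by ring) (by ring)

theorem le_lam1 (hp : 0 < p) (hL : 0 < L) {K : ℝ}
    (hK : ∀ u u', Adm L u u' →
      K * ∫ t in (0 : ℝ)..L, |u t| ^ p ≤ ∫ t in (0 : ℝ)..L, asymE p a b (u' t)) :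
    K ≤ lam1 p a b L := by
  refine le_csInf ?_ ?_
  · have hcont : Continuous fun t => |t * (L - t)| ^ p :=
      (by fun_prop : Continuous fun t => |t * (L - t)|).rpow_const fun _ => Or.inr hp.le
    have hpos : 0 < ∫ t in (0 : ℝ)..L, |t * (L - t)| ^ p := by
      refine intervalIntegral.intervalIntegral_pos_of_pos_on
        (hcont.intervalIntegrable 0 L) (fun t ht => ?_) hL
      have : 0 < t * (L - t) := mul_pos ht.1 (sub_pos.2 ht.2)
      positivity
    obtain ⟨v, v', hv, hv1, -⟩ := (adm_mul_sub L).exists_normalized (a := a) (b := b) hp.ne' hpos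
    exact ⟨_, v, v', hv, hv1, rfl⟩
  · rintro _ ⟨u, u', hu, hu1, rfl⟩
    simpa only [hu1, mul_one] using hK u u' hu

end Eigenvalue

/-! ### The monotone half-problem -/

/-- `k` is a constant in the Poincaré inequality `k ∫₀¹ wᵖ ≤ ∫₀¹ (w')ᵖ` for nondecreasing `C¹`
functions with `w 0 = 0` and `w 1` free. It is the problem solved by each of the two monotone
branches of a first eigenfunction, rescaled to unit length. -/
def IsMonotonePoincareConst (p k : ℝ) : Prop :=
  ∀ w w' : ℝ → ℝ, HasContDeriv w w' → (∀ t, 0 ≤ w' t) → w 0 = 0 →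
    k * ∫ t in (0 : ℝ)..1, w t ^ p ≤ ∫ t in (0 : ℝ)..1, w' t ^ p

section Tent

variable {w w' : ℝ → ℝ} {p a b x y L : ℝ}

theorem HasContDeriv.eq_of_one_le (h : HasContDeriv w w') (hw' : ∀ t, 1 ≤ t → w' t = 0) {t : ℝ}
    (ht : 1 ≤ t) : w t = w 1 := by
  rw [← sub_eq_zero, ← h.integral_deriv, intervalIntegral.integral_congr (g := fun _ => 0)
    fun s hs => hw' s (uIcc_of_le ht ▸ hs).1, intervalIntegral.integral_zero]

-- The vanishing of `w'` on `[1, ∞)` is what makes the peak at `x` smooth, and it allows the two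
-- branches to be added instead of being glued.
theorem HasContDeriv.exists_tent (h : HasContDeriv w w') (hw' : ∀ t, 1 ≤ t → w' t = 0)
    (hx : 0 < x) (hy : 0 < y) :
    ∃ u u', HasContDeriv u u' ∧
      (∀ t ≤ x, u t = w (t / x) ∧ u' t = w' (t / x) / x) ∧
      ∀ t ≥ x, u t = w ((x + y - t) / y) ∧ u' t = -(w' ((x + y - t) / y) / y) := by
  have hleft {t : ℝ} (ht : t ≤ x) : 1 ≤ (x + y - t) / y := by
    rw [le_div_iff₀ hy]
    linarith
  have hright {t : ℝ} (ht : x ≤ t) : 1 ≤ t / x := by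
    rwa [le_div_iff₀ hx, one_mul]
  refine ⟨fun t => w (t / x) + w ((x + y - t) / y) - w 1,
    fun t => w' (t / x) / x - w' ((x + y - t) / y) / y, ⟨fun t => ?_, ?_⟩, fun t ht => ?_,
    fun t ht => ?_⟩
  · have hl := (h.hasDerivAt (t / x)).comp t ((hasDerivAt_id t).div_const x)
    have hr := (h.hasDerivAt ((x + y - t) / y)).comp t
      (((hasDerivAt_id t).const_sub (x + y)).div_const y)
    refine ((hl.add hr).sub_const (w 1)).congr_deriv ?_
    ring
  · have := h.continuous_deriv
    fun_prop
  · simp [h.eq_of_one_le hw' (hleft ht), hw' _ (hleft ht)]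
  · simp [h.eq_of_one_le hw' (hright ht), hw' _ (hright ht)]

theorem integral_eq_add_mul_integral {f φ : ℝ → ℝ} (hf : Continuous f) (hx : 0 < x) (hy : 0 < y)
    (hleft : ∀ t ∈ Icc 0 x, f t = φ (t / x))
    (hright : ∀ t ∈ Icc x (x + y), f t = φ ((x + y - t) / y)) :
    ∫ t in (0 : ℝ)..x + y, f t = (x + y) * ∫ t in (0 : ℝ)..1, φ t := by
  have hl : ∫ t in (0 : ℝ)..x, f t = x * ∫ t in (0 : ℝ)..1, φ t := by
    rw [intervalIntegral.integral_congr fun t ht => hleft t (uIcc_of_le hx.le ▸ ht),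
      intervalIntegral.integral_comp_div _ hx.ne', zero_div, div_self hx.ne', smul_eq_mul]
  have hr : ∫ t in x..x + y, f t = y * ∫ t in (0 : ℝ)..1, φ t := by
    rw [intervalIntegral.integral_congr fun t ht =>
        hright t (uIcc_of_le (le_add_of_nonneg_right hy.le) ▸ ht),
      intervalIntegral.integral_comp_sub_left fun t => φ (t / y),
      intervalIntegral.integral_comp_div _ hy.ne', sub_self, add_sub_cancel_left, zero_div,
      div_self hy.ne', smul_eq_mul]
  rw [← intervalIntegral.integral_add_adjacent_intervals (hf.intervalIntegrable 0 x)
    (hf.intervalIntegrable x (x + y)), hl, hr, add_mul]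

theorem HasContDeriv.exists_adm (h : HasContDeriv w w') (hw0 : w 0 = 0) (h0 : ∀ t, 0 ≤ w' t)
    (hw' : ∀ t, 1 ≤ t → w' t = 0) (hp : 0 < p) (ha : 0 < a) (hb : 0 < b) (hL : 0 < L) :
    ∃ u u', Adm L u u' ∧
      ∫ t in (0 : ℝ)..L, |u t| ^ p = L * ∫ t in (0 : ℝ)..1, w t ^ p ∧
      ∫ t in (0 : ℝ)..L, asymE p a b (u' t) =
        L * (((a + b) / L) ^ p * ∫ t in (0 : ℝ)..1, w' t ^ p) := by
  -- The peak sits where the slopes of the two branches are in the ratio `b : a`, so that both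
  -- branches have the same energy density.
  obtain ⟨x, hx, hxa⟩ : ∃ x, 0 < x ∧ a / x = (a + b) / L :=
    ⟨a * L / (a + b), by positivity, by field_simp⟩
  obtain ⟨y, hy, hyb⟩ : ∃ y, 0 < y ∧ b / y = (a + b) / L :=
    ⟨b * L / (a + b), by positivity, by field_simp⟩
  obtain rfl : L = x + y := by
    field_simp at hxa hyb
    nlinarith
  obtain ⟨u, u', hu, hl, hr⟩ := h.exists_tent hw' hx hy
  have hu0 : u 0 = 0 := by rw [(hl 0 hx.le).1, zero_div, hw0]
  have huL : u (x + y) = 0 := by rw [(hr _ (by linarith)).1, sub_self, zero_div, hw0]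
  have hw (t : ℝ) (ht : 0 ≤ t) : 0 ≤ w t := hw0 ▸ h.monotone h0 ht
  refine ⟨u, u', hu.adm hu0 huL, ?_, ?_⟩
  · refine integral_eq_add_mul_integral (φ := fun t => w t ^ p)
      (hu.continuous.abs.rpow_const fun _ => Or.inr hp.le) hx hy (fun t ht => ?_) fun t ht => ?_
    · rw [(hl t ht.2).1, abs_of_nonneg (hw _ (div_nonneg ht.1 hx.le))]
    · rw [(hr t ht.1).1, abs_of_nonneg (hw _ (div_nonneg (sub_nonneg.2 ht.2) hy.le))]
  · rw [← intervalIntegral.integral_const_mul]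
    refine integral_eq_add_mul_integral (φ := fun t => ((a + b) / (x + y)) ^ p * w' t ^ p)
      ((continuous_asymE hp.le a b).comp hu.continuous_deriv) hx hy (fun t ht => ?_) fun t ht => ?_
    · rw [(hl t ht.2).2, asymE_of_nonneg hp.ne' ha.le (div_nonneg (h0 _) hx.le), ← hxa,
        ← Real.mul_rpow (by positivity) (h0 _)]
      ring_nf
    · rw [(hr t ht.1).2, asymE_neg, asymE_of_nonneg hp.ne' hb.le (div_nonneg (h0 _) hy.le), ← hyb,
        ← Real.mul_rpow (by positivity) (h0 _)]
      ring_nf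

end Tent

section OfVanishing

variable {w w' : ℝ → ℝ} {p k : ℝ}

theorem HasContDeriv.exists_cutoff (h : HasContDeriv w w') (hw0 : w 0 = 0) (h0 : ∀ t, 0 ≤ w' t)
    {s : ℝ} (hs : s < 1) :
    ∃ v v', HasContDeriv v v' ∧ v 0 = 0 ∧ (∀ t, 0 ≤ v' t) ∧ (∀ t, v' t ≤ w' t) ∧
      (∀ t, 1 ≤ t → v' t = 0) ∧ ∀ t ∈ Icc 0 s, v t = w t := by
  set χ : ℝ → ℝ := fun t => max 0 (min 1 ((1 - t) / (1 - s))) with hχ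
  have hs' : 0 < 1 - s := sub_pos.2 hs
  have hχ0 (t : ℝ) : 0 ≤ χ t := le_max_left _ _
  have hχ1 (t : ℝ) : χ t ≤ 1 := max_le zero_le_one (min_le_left _ _)
  have hχ_eq_one {t : ℝ} (ht : t ≤ s) : χ t = 1 := by
    have : 1 ≤ (1 - t) / (1 - s) := (one_le_div hs').2 (by linarith)
    simp only [hχ, min_eq_left this, max_eq_right zero_le_one]
  have hχ_eq_zero {t : ℝ} (ht : 1 ≤ t) : χ t = 0 :=
    max_eq_left <| (min_le_right _ _).trans <|
      div_nonpos_of_nonpos_of_nonneg (sub_nonpos.2 ht) hs'.le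
  have hcont : Continuous fun t => w' t * χ t := by
    have := h.continuous_deriv
    fun_prop
  refine ⟨_, _, HasContDeriv.primitive hcont 0, intervalIntegral.integral_same,
    fun t => mul_nonneg (h0 t) (hχ0 t), fun t => mul_le_of_le_one_right (h0 t) (hχ1 t),
    fun t ht => by simp only [hχ_eq_zero ht, mul_zero], fun t ht => ?_⟩
  have hcongr : ∫ r in (0 : ℝ)..t, w' r * χ r = ∫ r in (0 : ℝ)..t, w' r :=
    intervalIntegral.integral_congr fun r hr => by
      simp only [hχ_eq_one ((uIcc_of_le ht.1 ▸ hr).2.trans ht.2), mul_one]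
  simp only [hcongr, h.integral_deriv, hw0, sub_zero]

theorem IsMonotonePoincareConst.of_vanishing (hp : 0 < p) (hk : 0 ≤ k)
    (hvanish : ∀ w w' : ℝ → ℝ, HasContDeriv w w' → (∀ t, 0 ≤ w' t) → w 0 = 0 →
      (∀ t, 1 ≤ t → w' t = 0) →
      k * ∫ t in (0 : ℝ)..1, w t ^ p ≤ ∫ t in (0 : ℝ)..1, w' t ^ p) :
    IsMonotonePoincareConst p k := by
  intro w w' h h0 hw0
  have hcont {f : ℝ → ℝ} (hf : Continuous f) : Continuous fun t => f t ^ p :=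
    hf.rpow_const fun _ => Or.inr hp.le
  have htrunc (s : ℝ) (hs : s ∈ Ioo (0 : ℝ) 1) :
      k * ∫ t in (0 : ℝ)..s, w t ^ p ≤ ∫ t in (0 : ℝ)..1, w' t ^ p := by
    obtain ⟨v, v', hv, hv0, hv'0, hv'le, hv'1, hvw⟩ := h.exists_cutoff hw0 h0 hs.2
    have hvnonneg (t : ℝ) (ht : 0 ≤ t) : 0 ≤ v t := hv0 ▸ hv.monotone hv'0 ht
    calc k * ∫ t in (0 : ℝ)..s, w t ^ p = k * ∫ t in (0 : ℝ)..s, v t ^ p := by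
          congr 1
          refine intervalIntegral.integral_congr fun t ht => ?_
          simp only [hvw t (uIcc_of_le hs.1.le ▸ ht)]
      _ ≤ k * ∫ t in (0 : ℝ)..1, v t ^ p := by
          refine mul_le_mul_of_nonneg_left (intervalIntegral.integral_mono_interval le_rfl hs.1.le
            hs.2.le ?_ ((hcont hv.continuous).intervalIntegrable 0 1)) hk
          filter_upwards [ae_restrict_mem measurableSet_Ioc] with t ht
          exact Real.rpow_nonneg (hvnonneg t ht.1.le) p
      _ ≤ ∫ t in (0 : ℝ)..1, v' t ^ p := hvanish v v' hv hv'0 hv0 hv'1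
      _ ≤ ∫ t in (0 : ℝ)..1, w' t ^ p :=
          intervalIntegral.integral_mono_on zero_le_one
            ((hcont hv.continuous_deriv).intervalIntegrable 0 1)
            ((hcont h.continuous_deriv).intervalIntegrable 0 1)
            fun t _ => Real.rpow_le_rpow (hv'0 t) (hv'le t) hp.le
  have hlim : Continuous fun s => k * ∫ t in (0 : ℝ)..s, w t ^ p :=
    continuous_const.mul (HasContDeriv.primitive (hcont h.continuous) 0).continuous
  refine le_of_tendsto
    ((hlim.tendsto 1).mono_left (nhdsWithin_le_nhds (s := Iio 1))) ?_
  filter_upwards [Ioo_mem_nhdsLT zero_lt_one] with s hs using htrunc s hs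

end OfVanishing

theorem isMonotonePoincareConst_lam1 {p a b L : ℝ} (hp : 0 < p) (ha : 0 < a) (hb : 0 < b)
    (hL : 0 < L) : IsMonotonePoincareConst p (lam1 p a b L / ((a + b) / L) ^ p) := by
  have hc : 0 < ((a + b) / L) ^ p := by positivity
  refine .of_vanishing hp (div_nonneg (lam1_nonneg ha.le hb.le hL.le) hc.le)
    fun w w' h h0 hw0 hw' => ?_
  obtain ⟨u, u', hu, hI, hE⟩ := h.exists_adm hw0 h0 hw' hp ha hb hL
  have hle := lam1_mul_integral_le hp.ne' ha.le hb.le hL.le hu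
  rw [hI, hE, mul_left_comm, mul_le_mul_iff_right₀ hL] at hle
  rw [div_mul_eq_mul_div]
  exact (div_le_iff₀' hc).2 hle

/-! ### Nodal intervals -/

namespace IsMonotonePoincareConst

variable {p k a b α β L : ℝ} {u u' w w' : ℝ → ℝ}

theorem mul_integral_rpow_le (hk : IsMonotonePoincareConst p k) (h : HasContDeriv w w')
    (h0 : ∀ t, 0 ≤ w' t) (hα : w α = 0) (hαβ : α < β) :
    k * ∫ t in α..β, w t ^ p ≤ (β - α) ^ p * ∫ t in α..β, w' t ^ p := by
  have hℓ : 0 < β - α := sub_pos.2 hαβ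
  have hunit := hk _ _ (h.comp_mul_add (β - α) α) (fun t => mul_nonneg hℓ.le (h0 _))
    (by rw [mul_zero, zero_add, hα])
  simp only [Real.mul_rpow hℓ.le (h0 _)] at hunit
  rw [intervalIntegral.integral_const_mul,
    intervalIntegral.integral_comp_mul_add (fun t => w t ^ p) hℓ.ne',
    intervalIntegral.integral_comp_mul_add (fun t => w' t ^ p) hℓ.ne', smul_eq_mul, smul_eq_mul,
    mul_zero, mul_one, zero_add, sub_add_cancel, mul_left_comm, mul_left_comm (_ ^ p)] at hunit
  exact le_of_mul_le_mul_left hunit (inv_pos.2 hℓ)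

theorem mul_integral_posPart_le_of_left (hk : IsMonotonePoincareConst p k) (hp : 0 ≤ p)
    (hk0 : 0 ≤ k) (h : HasContDeriv u u') (hα : u α = 0) (hαβ : α < β) :
    k * ∫ t in α..β, max (u t) 0 ^ p ≤ (β - α) ^ p * ∫ t in α..β, max (u' t) 0 ^ p := by
  have hu' : Continuous fun t => max (u' t) 0 := h.continuous_deriv.max continuous_const
  have hw := HasContDeriv.primitive hu' α
  have hle (t : ℝ) (ht : t ∈ Icc α β) : max (u t) 0 ≤ ∫ s in α..t, max (u' s) 0 := by
    refine max_le ?_ (intervalIntegral.integral_nonneg ht.1 fun _ _ => le_max_right _ _)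
    calc u t = ∫ s in α..t, u' s := by rw [h.integral_deriv, hα, sub_zero]
      _ ≤ ∫ s in α..t, max (u' s) 0 :=
        intervalIntegral.integral_mono_on ht.1 (h.continuous_deriv.intervalIntegrable α t)
          (hu'.intervalIntegrable α t) fun _ _ => le_max_left _ _
  refine le_trans (mul_le_mul_of_nonneg_left ?_ hk0)
    (hk.mul_integral_rpow_le hw (fun _ => le_max_right _ _) intervalIntegral.integral_same hαβ)
  refine intervalIntegral.integral_mono_on hαβ.le (Continuous.intervalIntegrable ?_ α β)
    (Continuous.intervalIntegrable ?_ α β)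
    fun t ht => Real.rpow_le_rpow (le_max_right _ _) (hle t ht) hp
  · exact (h.continuous.max continuous_const).rpow_const fun _ => Or.inr hp
  · exact hw.continuous.rpow_const fun _ => Or.inr hp

theorem mul_integral_posPart_le_asymE_of_left (hk : IsMonotonePoincareConst p k) (hp : 0 ≤ p)
    (hk0 : 0 ≤ k) (ha : 0 < a) (hb : 0 ≤ b) (h : HasContDeriv u u') (hα : u α = 0)
    (hαβ : α < β) :
    k * ∫ t in α..β, max (u t) 0 ^ p ≤
      ((β - α) / a) ^ p * ∫ t in α..β, asymE p a b (u' t) := by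
  have hcont : Continuous fun t => a ^ p * max (u' t) 0 ^ p :=
    continuous_const.mul <|
      (h.continuous_deriv.max continuous_const).rpow_const fun _ => Or.inr hp
  have hℓ : 0 ≤ β - α := sub_nonneg.2 hαβ.le
  calc k * ∫ t in α..β, max (u t) 0 ^ p
      ≤ (β - α) ^ p * ∫ t in α..β, max (u' t) 0 ^ p :=
        hk.mul_integral_posPart_le_of_left hp hk0 h hα hαβ
    _ = ((β - α) / a) ^ p * ∫ t in α..β, a ^ p * max (u' t) 0 ^ p := by
        rw [intervalIntegral.integral_const_mul, ← mul_assoc,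
          ← Real.mul_rpow (div_nonneg hℓ ha.le) ha.le, div_mul_cancel₀ _ ha.ne']
    _ ≤ ((β - α) / a) ^ p * ∫ t in α..β, asymE p a b (u' t) :=
        mul_le_mul_of_nonneg_left
          (intervalIntegral.integral_mono_on hαβ.le (hcont.intervalIntegrable α β)
            (((continuous_asymE hp a b).comp h.continuous_deriv).intervalIntegrable α β)
            fun t _ => rpow_mul_max_rpow_le_asymE hb (u' t))
          (Real.rpow_nonneg (div_nonneg hℓ ha.le) p)

theorem mul_integral_posPart_le_asymE_of_right (hk : IsMonotonePoincareConst p k) (hp : 0 ≤ p)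
    (hk0 : 0 ≤ k) (ha : 0 ≤ a) (hb : 0 < b) (h : HasContDeriv u u') (hβ : u β = 0)
    (hαβ : α < β) :
    k * ∫ t in α..β, max (u t) 0 ^ p ≤
      ((β - α) / b) ^ p * ∫ t in α..β, asymE p a b (u' t) := by
  have hrefl : HasContDeriv (fun t => u (-t)) fun t => -u' (-t) := by
    simpa only [neg_one_mul, add_zero] using h.comp_mul_add (-1) 0
  have hle := hk.mul_integral_posPart_le_asymE_of_left hp hk0 hb ha hrefl (α := -β) (β := -α)
    (by rwa [neg_neg]) (neg_lt_neg hαβ)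
  simp only [asymE_neg] at hle
  rwa [intervalIntegral.integral_comp_neg fun t => max (u t) 0 ^ p,
    intervalIntegral.integral_comp_neg fun t => asymE p a b (u' t), neg_neg, neg_neg,
    neg_sub_neg] at hle

theorem mul_integral_posPart_le (hk : IsMonotonePoincareConst p k) (hp : 0 ≤ p) (hk0 : 0 ≤ k)
    (ha : 0 < a) (hb : 0 < b) (h : HasContDeriv u u') (hα : u α = 0) (hβ : u β = 0)
    (hαβ : α < β) :
    k * ∫ t in α..β, max (u t) 0 ^ p ≤
      ((β - α) / (a + b)) ^ p * ∫ t in α..β, asymE p a b (u' t) := by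
  obtain ⟨x, hx⟩ : ∃ x, x = α + a * (β - α) / (a + b) := ⟨_, rfl⟩
  have hαx : (x - α) / a = (β - α) / (a + b) := by
    rw [hx]
    field_simp
    ring
  have hxβ : (β - x) / b = (β - α) / (a + b) := by
    rw [hx]
    field_simp
    ring
  have hquot : 0 < (β - α) / (a + b) := div_pos (sub_pos.2 hαβ) (add_pos ha hb)
  have hα_lt : α < x := sub_pos.1 ((div_pos_iff_of_pos_right ha).1 (hαx ▸ hquot))
  have hlt_β : x < β := sub_pos.1 ((div_pos_iff_of_pos_right hb).1 (hxβ ▸ hquot))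
  have hleft := hk.mul_integral_posPart_le_asymE_of_left hp hk0 ha hb.le h hα hα_lt
  have hright := hk.mul_integral_posPart_le_asymE_of_right hp hk0 ha.le hb h hβ hlt_β
  have hu : Continuous fun t => max (u t) 0 ^ p :=
    (h.continuous.max continuous_const).rpow_const fun _ => Or.inr hp
  have hE : Continuous fun t => asymE p a b (u' t) :=
    (continuous_asymE hp a b).comp h.continuous_deriv
  rw [← intervalIntegral.integral_add_adjacent_intervals (hu.intervalIntegrable α x)
      (hu.intervalIntegrable x β),
    ← intervalIntegral.integral_add_adjacent_intervals (hE.intervalIntegrable α x)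
      (hE.intervalIntegrable x β), mul_add, mul_add]
  exact add_le_add (hαx ▸ hleft) (hxβ ▸ hright)

theorem mul_integral_abs_rpow_le_of_ne_zero (hk : IsMonotonePoincareConst p k) (hp : 0 ≤ p)
    (hk0 : 0 ≤ k) (ha : 0 < a) (hb : 0 < b) (h : HasContDeriv u u') (hα : u α = 0)
    (hβ : u β = 0) (hαβ : α < β) (hu : ∀ t ∈ Ioo α β, u t ≠ 0) :
    k * ∫ t in α..β, |u t| ^ p ≤
      ((β - α) / (a + b)) ^ p * ∫ t in α..β, asymE p a b (u' t) := by
  have hcongr {v : ℝ → ℝ} (hv : ∀ t ∈ Ioo α β, max (v t) 0 = |u t|) :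
      ∫ t in α..β, |u t| ^ p = ∫ t in α..β, max (v t) 0 ^ p :=
    intervalIntegral.integral_congr_Ioo_of_le hαβ.le fun t ht => by simp only [hv t ht]
  rcases forall_pos_or_forall_neg isPreconnected_Ioo h.continuous.continuousOn hu with hpos | hneg
  · rw [hcongr fun t ht => by rw [abs_of_pos (hpos t ht), max_eq_left (hpos t ht).le]]
    exact hk.mul_integral_posPart_le hp hk0 ha hb h hα hβ hαβ
  · rw [hcongr fun t ht => by
      rw [abs_of_neg (hneg t ht), max_eq_left (neg_nonneg.2 (hneg t ht).le)], add_comm a b]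
    simpa only [asymE_neg] using hk.mul_integral_posPart_le hp hk0 hb ha h.neg
      (neg_eq_zero.2 hα) (neg_eq_zero.2 hβ) hαβ

theorem setIntegral_Ioo_mono_of_ne_zero (hk : IsMonotonePoincareConst p k) (hp : 0 ≤ p)
    (hk0 : 0 ≤ k) (ha : 0 < a) (hb : 0 < b) (h : HasContDeriv u u') (hα : u α = 0)
    (hβ : u β = 0) (hαβ : α < β) (hL : β - α ≤ L) (hu : ∀ t ∈ Ioo α β, u t ≠ 0) :
    ∫ t in Ioo α β, k * |u t| ^ p ≤
      ∫ t in Ioo α β, (L / (a + b)) ^ p * asymE p a b (u' t) := by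
  have hab : 0 < a + b := add_pos ha hb
  rw [← integral_Ioc_eq_integral_Ioo, ← integral_Ioc_eq_integral_Ioo,
    ← intervalIntegral.integral_of_le hαβ.le, ← intervalIntegral.integral_of_le hαβ.le,
    intervalIntegral.integral_const_mul, intervalIntegral.integral_const_mul]
  refine (hk.mul_integral_abs_rpow_le_of_ne_zero hp hk0 ha hb h hα hβ hαβ hu).trans
    (mul_le_mul_of_nonneg_right (Real.rpow_le_rpow ?_ ?_ hp) ?_)
  · exact div_nonneg (sub_nonneg.2 hαβ.le) hab.le
  · exact div_le_div_of_nonneg_right hL hab.le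
  · exact intervalIntegral.integral_nonneg hαβ.le fun _ _ => asymE_nonneg ha.le hb.le _

theorem mul_integral_abs_rpow_le (hk : IsMonotonePoincareConst p k) (hp : 0 < p) (hk0 : 0 ≤ k)
    (ha : 0 < a) (hb : 0 < b) (hL : 0 ≤ L) (h : HasContDeriv u u') (hu0 : u 0 = 0)
    (huL : u L = 0) :
    k * ∫ t in (0 : ℝ)..L, |u t| ^ p ≤
      (L / (a + b)) ^ p * ∫ t in (0 : ℝ)..L, asymE p a b (u' t) := by
  set U := {t ∈ Ioo 0 L | u t ≠ 0}
  have hUsub : U ⊆ Ioc 0 L := (sep_subset _ _).trans Ioo_subset_Ioc_self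
  have hUopen : IsOpen U := isOpen_Ioo.inter (isOpen_ne.preimage h.continuous)
  have hzero {t : ℝ} (ht : t ∈ Icc 0 L) (htU : t ∉ U) : u t = 0 := by
    by_contra hne
    exact htU ⟨⟨ht.1.lt_of_ne fun h0 => hne (h0 ▸ hu0), ht.2.lt_of_ne fun hL => hne (hL ▸ huL)⟩,
      hne⟩
  set f := fun t => k * |u t| ^ p
  set g := fun t => (L / (a + b)) ^ p * asymE p a b (u' t)
  have hg0 (t : ℝ) : 0 ≤ g t :=
    mul_nonneg (by positivity) (asymE_nonneg ha.le hb.le _)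
  have hf : Continuous f :=
    continuous_const.mul (h.continuous.abs.rpow_const fun _ => Or.inr hp.le)
  have hg : Continuous g :=
    continuous_const.mul ((continuous_asymE hp.le a b).comp h.continuous_deriv)
  have hnodal (α β : ℝ) (hαβ : α < β) (hα : α ∉ U) (hβ : β ∉ U) (hsub : Ioo α β ⊆ U) :
      ∫ t in Ioo α β, f t ≤ ∫ t in Ioo α β, g t := by
    obtain ⟨h0α, hβL⟩ := (Ioo_subset_Ioo_iff hαβ).1 (hsub.trans (sep_subset _ _))
    exact hk.setIntegral_Ioo_mono_of_ne_zero hp.le hk0 ha hb h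
      (hzero ⟨h0α, hαβ.le.trans hβL⟩ hα) (hzero ⟨h0α.trans hαβ.le, hβL⟩ hβ) hαβ (by linarith)
      fun t ht => (hsub ht).2
  rw [← intervalIntegral.integral_const_mul, ← intervalIntegral.integral_const_mul,
    intervalIntegral.integral_of_le hL, intervalIntegral.integral_of_le hL]
  calc ∫ t in Ioc 0 L, f t = ∫ t in U, f t :=
        setIntegral_eq_of_subset_of_forall_sdiff_eq_zero measurableSet_Ioc hUsub fun t ht => by
          simp only [f, hzero (Ioc_subset_Icc_self ht.1) ht.2, abs_zero, Real.zero_rpow hp.ne',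
            mul_zero]
    _ ≤ ∫ t in U, g t := setIntegral_mono_of_components hUopen
        (bddBelow_Ioc.mono hUsub) (bddAbove_Ioc.mono hUsub)
        (hf.integrableOn_Ioc.mono_set hUsub) (hg.integrableOn_Ioc.mono_set hUsub) hnodal
    _ ≤ ∫ t in Ioc 0 L, g t := setIntegral_mono_set hg.integrableOn_Ioc
        (Filter.Eventually.of_forall hg0) hUsub.eventuallyLE

theorem mul_rpow_le_lam1 (hk : IsMonotonePoincareConst p k) (hp : 0 < p) (hk0 : 0 ≤ k)
    (ha : 0 < a) (hb : 0 < b) (hL : 0 < L) : k * ((a + b) / L) ^ p ≤ lam1 p a b L := by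
  refine le_lam1 hp hL fun u u' ⟨hC1, hu0, huL⟩ => ?_
  obtain ⟨v, v', hv, hvu, hvu'⟩ := hC1.exists_hasContDeriv hL.le
  have hle := hk.mul_integral_abs_rpow_le hp hk0 ha hb hL.le hv
    ((hvu (left_mem_Icc.2 hL.le)).trans hu0) ((hvu (right_mem_Icc.2 hL.le)).trans huL)
  have hI : ∫ t in (0 : ℝ)..L, |v t| ^ p = ∫ t in (0 : ℝ)..L, |u t| ^ p :=
    intervalIntegral.integral_congr fun t ht => by simp only [hvu (uIcc_of_le hL.le ▸ ht)]
  have hE : ∫ t in (0 : ℝ)..L, asymE p a b (v' t) = ∫ t in (0 : ℝ)..L, asymE p a b (u' t) :=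
    intervalIntegral.integral_congr fun t ht => by simp only [hvu' (uIcc_of_le hL.le ▸ ht)]
  have hc : 0 < ((a + b) / L) ^ p := by positivity
  rwa [hI, hE, ← inv_div, Real.inv_rpow (by positivity), inv_mul_eq_div, le_div_iff₀ hc,
    mul_right_comm] at hle

end IsMonotonePoincareConst

theorem lam1_div_rpow_le {p a b c d L : ℝ} (hp : 0 < p) (ha : 0 < a) (hb : 0 < b) (hc : 0 < c)
    (hd : 0 < d) (hL : 0 < L) : lam1 p a b L / (a + b) ^ p ≤ lam1 p c d L / (c + d) ^ p := by
  have hk : 0 ≤ lam1 p a b L / ((a + b) / L) ^ p :=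
    div_nonneg (lam1_nonneg ha.le hb.le hL.le) (by positivity)
  have hle := (isMonotonePoincareConst_lam1 hp ha hb hL).mul_rpow_le_lam1 hp hk hc hd hL
  have hLp : 0 < L ^ p := Real.rpow_pos_of_pos hL p
  rwa [Real.div_rpow (by positivity) hL.le, Real.div_rpow (by positivity) hL.le, ← mul_div_assoc,
    div_div_eq_mul_div, div_mul_eq_mul_div, div_right_comm, mul_right_comm,
    mul_div_cancel_right₀ _ hLp.ne', ← div_mul_eq_mul_div, ← le_div_iff₀ (by positivity)] at hle

theorem stmt0_general (p a b L : ℝ) (hp : 0 < p) (ha : 0 < a) (hb : 0 < b) (hL : 0 < L) :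
    lam1 p a b L = ((a + b) / 2) ^ p * lam1 p 1 1 L := by
  have heq : lam1 p a b L / (a + b) ^ p = lam1 p 1 1 L / 2 ^ p := by
    rw [← one_add_one_eq_two]
    exact le_antisymm (lam1_div_rpow_le hp ha hb one_pos one_pos hL)
      (lam1_div_rpow_le hp one_pos one_pos ha hb hL)
  rw [div_eq_iff (by positivity)] at heq
  rw [heq, Real.div_rpow (by positivity) zero_le_two]
  ring

theorem stmt0 (p a b L : ℝ) (hp : 1 < p) (ha : 0 < a) (hb : 0 < b) (hL : 0 < L) :
    lam1 p a b L = ((a + b) / 2) ^ p * lam1 p 1 1 L :=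
  stmt0_general p a b L (zero_lt_one.trans hp) ha hb hL
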